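/- arXiv:2604.14584 — 2 statements merged into one kernel-verified Lean document; each statement's English description precedes it below -/
import Mathlib

section
/- Let (M,C) be a q-Cartier module over a commutative ring R of characteristic p with M finitely generated, and let N ⊆ M be a finitely generated R-submodule. (1) If R is a finitely generated 𝔽_p-algebra, then N is C-preperiodic, i.e., there exist integers i, j > 0 with C^i(N) = C^{i+j}(N). (2) If R is Noetherian and F-finite and either C(N) ⊆ N or N ⊆ C(N), then N is C-preperiodic. -/
open Pointwise Function

/-!
(1) Let `R = k[x₁, …, xₙ]` with `k` finite, let `V` be the `k`-span of generators of `M` over `R`,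
and let `B_d` consist of the polynomials of degree at most `d` in each `xᵢ`. Splitting off `q`-th
powers shows that `C` sends `B_d • V` into `B_{d/q + K} • V` for some constant `K`, so for large `D`
it maps `F = B_D • V` into itself, even after multiplication by elements of `B_{q-1}`. Hence if `F`
contains generators of `N`, then every `C^i(N)` is generated by its elements in `F`. As `F` is
finite, two of the `C^i(N)` coincide.

(2) An ascending chain `C^i(N)` stabilises because `M` is Noetherian. If the chain descends, the
colon ideals `(C^{i+1}(N) : C^i(N))` ascend, so after replacing `N` by some `C^n(N)` they are all
equal to one ideal `J`. For `a ∈ J`, the identity `a • C z = C (a ^ q • z)` and `q ≥ 2` show that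
`a ^ 2` carries `N` into every `C^i(N)`. Let `I` be the ideal of all elements with this property, so
that `J` lies in every prime containing `I`. If `N ≠ C(N)`, then `I ≠ R`; localised at a minimal
prime `P` of `I`, the chain of the `C^i(N)/IN` lives in a finite module over the Artinian ring
`(R/I)_P`, where it stabilises, and this puts an element of `J` outside `P`, a contradiction.
-/

section LocalizedSubmodule

variable {R M : Type*} [CommRing R] [AddCommGroup M] [Module R M]

theorem exists_smul_mem_of_localized_le {S : Submonoid R} {K L : Submodule R M}
    (h : K.localized S ≤ L.localized S) {x : M} (hx : x ∈ K) : ∃ s ∈ S, s • x ∈ L := by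
  obtain ⟨y, hy, t, hyt⟩ := h ⟨x, hx, 1, IsLocalizedModule.mk'_one S _ x⟩
  rw [IsLocalizedModule.mk'_eq_iff, ← LinearMap.map_smul_of_tower,
    IsLocalizedModule.eq_iff_exists S] at hyt
  obtain ⟨c, hc⟩ := hyt
  refine ⟨c * t, (c * t).2, ?_⟩
  rw [mul_smul]
  exact (hc ▸ L.smul_mem c hy :)

theorem not_colon_le_of_localized_le {P : Ideal R} [P.IsPrime] {K L : Submodule R M} (hK : K.FG)
    (h : K.localized P.primeCompl ≤ L.localized P.primeCompl) : ¬ L.colon (K : Set M) ≤ P := by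
  have : Module.Finite R (K.map L.mkQ) := Module.Finite.iff_fg.mpr (hK.map _)
  rw [← Submodule.annihilator_map_mkQ_eq_colon]
  refine (Module.mem_support_iff_of_finite (p := ⟨P, ‹_›⟩)).not.mp
    (Module.notMem_support_iff'.mpr ?_)
  rintro ⟨_, x, hx, rfl⟩
  obtain ⟨s, hs, hsx⟩ := exists_smul_mem_of_localized_le h hx
  exact ⟨s, hs, Subtype.ext ((Submodule.Quotient.mk_eq_zero L).mpr hsx)⟩

theorem exists_not_colon_le_of_mem_minimalPrimes [IsNoetherianRing R] [Module.Finite R M]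
    {P : Ideal R} (hP : P ∈ minimalPrimes R) {N : ℕ → Submodule R M} (hN : Antitone N) :
    ∃ i, ¬ (N (i + 1)).colon (N i : Set M) ≤ P := by
  have := hP.isPrime
  let S := Localization.AtPrime P
  have : IsNoetherianRing S := IsLocalization.isNoetherianRing P.primeCompl S inferInstance
  have : Ring.KrullDimLE 0 S := Ring.KrullDimLE.of_isLocalization P hP S
  have : IsArtinianRing S := IsNoetherianRing.isArtinianRing_of_krullDimLE_zero
  have : Module.Finite S (LocalizedModule P.primeCompl M) :=
    Module.Finite.of_isLocalizedModule P.primeCompl (LocalizedModule.mkLinearMap P.primeCompl M)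
  have hanti : Antitone fun i ↦ (N i).localized P.primeCompl := fun i j hij ↦
    (Submodule.localized'gi S P.primeCompl (LocalizedModule.mkLinearMap _ M)).gc.monotone_l (hN hij)
  obtain ⟨i, hi⟩ := IsArtinian.monotone_stabilizes (R := S) ⟨_, hanti.dual_right⟩
  have hstable : (N i).localized P.primeCompl = (N (i + 1)).localized P.primeCompl :=
    hi (i + 1) i.le_succ
  exact ⟨i, not_colon_le_of_localized_le (IsNoetherian.noetherian _) hstable.le⟩

theorem exists_not_colon_le_of_mem_minimalPrimes_of_le_colon [IsNoetherianRing R]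
    [Module.Finite R M] {I P : Ideal R} (hP : P ∈ I.minimalPrimes) {N : ℕ → Submodule R M}
    (hN : Antitone N) (hI : ∀ i, I ≤ (N i).colon Set.univ) :
    ∃ i, ¬ (N (i + 1)).colon (N i : Set M) ≤ P := by
  rw [Ideal.minimalPrimes_eq_comap] at hP
  obtain ⟨Q, hQ, rfl⟩ := hP
  let T : Submodule R M := I • ⊤
  have hT (i : ℕ) : T ≤ N i := Submodule.smul_le.mpr fun r hr x _ ↦
    Submodule.mem_colon.mp (hI i hr) x (Set.mem_univ x)
  have : Module.Finite (R ⧸ I) (M ⧸ T) := Module.Finite.of_restrictScalars_finite R _ _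
  let π : M →ₛₗ[Ideal.Quotient.mk I] M ⧸ T :=
    { T.mkQ.toAddMonoidHom with map_smul' := fun _ _ ↦ rfl }
  obtain ⟨i, hi⟩ := exists_not_colon_le_of_mem_minimalPrimes hQ
    (N := fun i ↦ (N i).map π) fun i j hij ↦ Submodule.map_mono (hN hij)
  refine ⟨i, fun hle ↦ hi fun s hs ↦ ?_⟩
  obtain ⟨r, rfl⟩ := Ideal.Quotient.mk_surjective s
  refine hle (Submodule.mem_colon.mpr fun x hx ↦ ?_)
  obtain ⟨y, hy, hyx⟩ := Submodule.mem_colon.mp hs (π x) (Submodule.mem_map_of_mem hx)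
  have hsub : y - r • x ∈ N (i + 1) := hT _ ((Submodule.Quotient.eq T).mp hyx)
  simpa using sub_mem hy hsub

end LocalizedSubmodule

/-- `C` is the structure map of a `q`-Cartier module: an additive endomorphism that is linear over
the inverse of the Frobenius `a ↦ a ^ q`. -/
structure IsCartier (R : Type*) {M : Type*} [CommRing R] [AddCommGroup M] [Module R M] (q : ℕ)
    (C : M →+ M) : Prop where
  map_pow_smul : ∀ (a : R) (x : M), C (a ^ q • x) = a • C x

namespace IsCartier

section Image

variable {R M : Type*} [CommRing R] [AddCommGroup M] [Module R M] {q : ℕ} {C : M →+ M}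

/-- The image `C(N)` of an `R`-submodule `N` under the structure map of a Cartier module, as an
`R`-submodule. -/
def map (hC : IsCartier R q C) (N : Submodule R M) : Submodule R M :=
  { N.toAddSubmonoid.map C with
    smul_mem' := by
      rintro a _ ⟨x, hx, rfl⟩
      exact ⟨a ^ q • x, N.smul_mem _ hx, hC.map_pow_smul a x⟩ }

variable (hC : IsCartier R q C) {N : Submodule R M}

theorem map_mono : Monotone hC.map := fun _ _ h ↦ Set.image_mono h

theorem coe_iterate_map (i : ℕ) : (hC.map^[i] N : Set M) = C^[i] '' N := by
  induction i with
  | zero => exact (Set.image_id _).symm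
  | succ i ih =>
    rw [iterate_succ_apply', iterate_succ', Set.image_comp, ← ih]
    rfl

theorem exists_iterate_map_eq_succ_of_le_map [IsNoetherian R M] (h : N ≤ hC.map N) :
    ∃ n, hC.map^[n] N = hC.map^[n + 1] N := by
  obtain ⟨n, hn⟩ := monotone_stabilizes_iff_noetherian.mpr ‹_›
    ⟨_, hC.map_mono.monotone_iterate_of_le_map h⟩
  exact ⟨n, hn (n + 1) n.le_succ⟩

end Image

section Colon

variable {R M : Type*} [CommRing R] [AddCommGroup M] [Module R M] {q : ℕ} {C : M →+ M}
  (hC : IsCartier R q C) {N K : Submodule R M}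

theorem smul_mem_map_of_pow_smul_mem {a : R} {x : M} {m : ℕ} (hm : m ≤ q) (hx : a ^ m • x ∈ N) :
    a • C x ∈ hC.map N := by
  refine ⟨a ^ q • x, ?_, hC.map_pow_smul a x⟩
  have : a ^ q • x = a ^ (q - m) • a ^ m • x := by rw [← mul_smul, ← pow_add, Nat.sub_add_cancel hm]
  exact this ▸ N.smul_mem _ hx

theorem colon_le_colon_map (hq : 1 ≤ q) :
    N.colon (K : Set M) ≤ (hC.map N).colon (hC.map K : Set M) := by
  intro a ha
  rw [Submodule.mem_colon] at ha ⊢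
  rintro _ ⟨x, hx, rfl⟩
  exact hC.smul_mem_map_of_pow_smul_mem hq (by simpa using ha x hx)

theorem sq_mem_colon_iterate_map (hq : 2 ≤ q) {a : R} (ha : a ∈ (hC.map N).colon (N : Set M))
    (i : ℕ) : a ^ 2 ∈ (hC.map^[i] N).colon (N : Set M) := by
  induction i with
  | zero => exact Submodule.mem_colon.mpr fun x hx ↦ N.smul_mem _ hx
  | succ i ih =>
    rw [Submodule.mem_colon] at ha ih ⊢
    intro x hx
    obtain ⟨z, hz, hzx⟩ := ha x hx
    rw [iterate_succ_apply', pow_two, mul_smul, ← hzx]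
    exact hC.smul_mem_map_of_pow_smul_mem hq (ih z hz)

theorem le_map_of_colon_le [IsNoetherianRing R] (hq : 2 ≤ q) (hN : N.FG) (hle : hC.map N ≤ N)
    (hcolon : ∀ i, (hC.map^[i + 1] N).colon (hC.map^[i] N : Set M) ≤
      (hC.map N).colon (N : Set M)) : N ≤ hC.map N := by
  let I : Ideal R := ⨅ i, (hC.map^[i] N).colon (N : Set M)
  have hanti : Antitone fun i ↦ hC.map^[i] N := hC.map_mono.antitone_iterate_of_map_le hle
  by_contra hnot
  have hI : I ≠ ⊤ := fun htop ↦ hnot <| (Submodule.colon_eq_top_iff_subset _).mp <|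
    top_le_iff.mp <| htop.symm.le.trans (iInf_le _ 1)
  obtain ⟨P, hP⟩ := Ideal.nonempty_minimalPrimes hI
  have : Module.Finite R N := Module.Finite.iff_fg.mpr hN
  obtain ⟨i, hi⟩ := exists_not_colon_le_of_mem_minimalPrimes_of_le_colon (M := N) hP
    (N := fun i ↦ (hC.map^[i] N).comap N.subtype) (fun i j hij ↦ Submodule.comap_mono (hanti hij))
    fun i a ha ↦ Submodule.mem_colon.mpr fun x _ ↦
      Submodule.mem_colon.mp (iInf_le (fun i ↦ (hC.map^[i] N).colon (N : Set M)) i ha) x x.2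
  refine hi fun a ha ↦ hP.isPrime.mem_of_pow_mem 2 (hP.1.2 ?_)
  have hacolon : a ∈ (hC.map^[i + 1] N).colon (hC.map^[i] N : Set M) :=
    Submodule.mem_colon.mpr fun x hx ↦
      Submodule.mem_colon.mp ha ⟨x, hanti i.zero_le hx⟩ hx
  exact (Submodule.mem_iInf _).mpr (hC.sq_mem_colon_iterate_map hq (hcolon i hacolon))

theorem exists_iterate_map_eq_succ_of_map_le [IsNoetherianRing R] (hq : 2 ≤ q) (hN : N.FG)
    (h : hC.map N ≤ N) : ∃ n, hC.map^[n] N = hC.map^[n + 1] N := by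
  have hanti : Antitone fun i ↦ hC.map^[i] N := hC.map_mono.antitone_iterate_of_map_le h
  have hcolon : Monotone fun i ↦ (hC.map^[i + 1] N).colon (hC.map^[i] N : Set M) :=
    monotone_nat_of_le_succ fun i ↦ by
      simp only [iterate_succ_apply' hC.map]
      exact hC.colon_le_colon_map (one_le_two.trans hq)
  obtain ⟨n, hn⟩ := monotone_stabilizes_iff_noetherian.mpr ‹_› ⟨_, hcolon⟩
  have hmap : hC.map (hC.map^[n] N) = hC.map^[n + 1] N := (iterate_succ_apply' ..).symm
  refine ⟨n, le_antisymm ?_ (hanti n.le_succ)⟩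
  rw [← hmap]
  refine hC.le_map_of_colon_le hq (hN.of_le (hanti n.zero_le)) (hmap ▸ hanti n.le_succ) fun i ↦ ?_
  rw [hmap, ← iterate_add_apply, ← iterate_add_apply, add_right_comm, add_comm i]
  exact (hn (n + i) le_self_add).ge

end Colon

end IsCartier

section BoundedDegree

variable {k R M σ : Type*} [CommRing k] [CommRing R] [Algebra k R] [AddCommGroup M] [Module k M]
  [Module R M] [IsScalarTower k R M]

theorem smul_fg {A : Submodule k R} {V : Submodule k M} (hA : A.FG) (hV : V.FG) : (A • V).FG := by
  have : A • V = Submodule.map₂ (Algebra.lsmul k k M).toLinearMap A V :=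
    le_antisymm (Submodule.smul_le.mpr fun _ ha _ hv ↦ Submodule.apply_mem_map₂ _ ha hv)
      (Submodule.map₂_le.mpr fun _ ha _ hv ↦ Submodule.smul_mem_smul ha hv)
  exact this ▸ hA.map₂ _ hV

theorem smul_le_restrictScalars {A : Submodule k R} {V : Submodule k M} {N : Submodule R M}
    (h : V ≤ N.restrictScalars k) : A • V ≤ N.restrictScalars k :=
  Submodule.smul_le.mpr fun r _ _ hv ↦ N.smul_mem r (h hv)

variable [Fintype σ]

variable (k) in
/-- The `k`-submodule of `R` of polynomials in the elements `x i` of degree at most `d` in each of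
them: the pieces of a filtration of the algebra generated by `x`. Bounding the exponents separately,
rather than the total degree, makes it compatible with division of exponents by `q`. -/
def boundedDegree (x : σ → R) (d : ℕ) : Submodule k R :=
  Submodule.span k ((fun a : σ → ℕ ↦ ∏ i, x i ^ a i) '' Set.Iic fun _ ↦ d)

variable {x : σ → R} {d d' q : ℕ}

theorem boundedDegree_mono : Monotone (boundedDegree k x) := fun _ _ h ↦
  Submodule.span_mono (Set.image_mono (Set.Iic_subset_Iic.mpr fun _ ↦ h))

theorem prod_pow_mem_boundedDegree {a : σ → ℕ} (ha : ∀ i, a i ≤ d) :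
    ∏ i, x i ^ a i ∈ boundedDegree k x d :=
  Submodule.subset_span ⟨a, ha, rfl⟩

theorem boundedDegree_fg : (boundedDegree k x d).FG := by
  classical exact Submodule.fg_span ((Set.finite_Iic _).image _)

theorem boundedDegree_mul_le :
    boundedDegree k x d * boundedDegree k x d' ≤ boundedDegree k x (d + d') := by
  rw [boundedDegree, boundedDegree, Submodule.span_mul_span, Submodule.span_le]
  rintro _ ⟨_, ⟨a, ha, rfl⟩, _, ⟨b, hb, rfl⟩, rfl⟩
  simp only [← Finset.prod_mul_distrib, ← pow_add]
  exact prod_pow_mem_boundedDegree fun i ↦ add_le_add (ha i) (hb i)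

theorem boundedDegree_smul_smul_le {V : Submodule k M} :
    boundedDegree k x d • boundedDegree k x d' • V ≤ boundedDegree k x (d + d') • V := by
  rw [← Submodule.smul_assoc]
  exact Submodule.smul_mono_left boundedDegree_mul_le

theorem boundedDegree_smul_mono (V : Submodule k M) :
    Monotone fun d ↦ boundedDegree k x d • V := fun _ _ h ↦
  Submodule.smul_mono_left (boundedDegree_mono h)

theorem iSup_boundedDegree (hx : Algebra.adjoin k (Set.range x) = ⊤) :
    ⨆ d, boundedDegree k x d = ⊤ := by
  rw [← Algebra.top_toSubmodule, ← hx, Algebra.adjoin_eq_span, eq_comm]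
  refine le_antisymm (Submodule.span_le.mpr fun r hr ↦ ?_) ?_
  · obtain ⟨a, rfl⟩ := Submonoid.mem_closure_range_iff_of_fintype.mp hr
    exact Submodule.mem_iSup_of_mem (∑ i, a i) <|
      prod_pow_mem_boundedDegree fun i ↦ Finset.single_le_sum_of_canonicallyOrdered (by simp)
  · refine iSup_le fun d ↦ Submodule.span_mono ?_
    rintro _ ⟨a, -, rfl⟩
    exact Submonoid.mem_closure_range_iff_of_fintype.mpr ⟨a, rfl⟩

theorem restrictScalars_span_le_top_smul (V : Submodule k M) :
    (Submodule.span R (V : Set M)).restrictScalars k ≤ (⊤ : Submodule k R) • V := by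
  intro m hm
  rw [Submodule.restrictScalars_mem] at hm
  induction hm using Submodule.closure_induction with
  | zero => exact zero_mem _
  | add _ _ _ _ h₁ h₂ => exact add_mem h₁ h₂
  | smul_mem r v hv => exact Submodule.smul_mem_smul Submodule.mem_top hv

theorem exists_le_boundedDegree_smul (hx : Algebra.adjoin k (Set.range x) = ⊤)
    {V T : Submodule k M} (hT : T.FG)
    (hTV : T ≤ (Submodule.span R (V : Set M)).restrictScalars k) :
    ∃ d, T ≤ boundedDegree k x d • V := by
  have hsup : T ≤ ⨆ d, boundedDegree k x d • V := by
    rw [← Submodule.iSup_smul, iSup_boundedDegree hx]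
    exact hTV.trans (restrictScalars_span_le_top_smul V)
  obtain ⟨_, ⟨d, rfl⟩, hd⟩ := (Submodule.fg_iff_compact T).mp hT _ _ (Set.range_nonempty _)
    (boundedDegree_smul_mono V).directed_le.directedOn_range isLUB_iSup hsup
  exact ⟨d, hd⟩

end BoundedDegree

theorem exists_eq_add_of_le_span_inter {R M : Type*} [Semiring R] [AddCommMonoid M] [Module R M]
    {N : ℕ → Submodule R M} {B : Set M} (hB : B.Finite)
    (hN : ∀ i, N i ≤ Submodule.span R (N i ∩ B)) :
    ∃ i j, 0 < i ∧ 0 < j ∧ N i = N (i + j) := by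
  have hspan (i : ℕ) : N i = Submodule.span R (N i ∩ B) :=
    (hN i).antisymm (Submodule.span_le.mpr Set.inter_subset_left)
  obtain ⟨a, b, hab, h⟩ := Set.Finite.exists_lt_map_eq_of_forall_mem
    (f := fun i ↦ (N (i + 1) : Set M) ∩ B) (fun _ ↦ Set.inter_subset_right) hB.finite_subsets
  refine ⟨a + 1, b - a, a.succ_pos, Nat.sub_pos_of_lt hab, ?_⟩
  rw [show a + 1 + (b - a) = b + 1 by lia, hspan (a + 1), hspan (b + 1)]
  exact congrArg _ h

theorem exists_forall_div_add_le {q : ℕ} (hq : 2 ≤ q) (K : ℕ) :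
    ∃ D₁, ∀ D ≥ D₁, (q - 1 + D) / q + K ≤ D := by
  refine ⟨2 * K + 1, fun D hD ↦ ?_⟩
  obtain ⟨E, rfl⟩ := Nat.exists_eq_add_of_le (show K ≤ D by lia)
  have : (q - 1 + (K + E)) / q ≤ E := Nat.div_le_of_le_mul <| by
    obtain ⟨q, rfl⟩ := Nat.exists_eq_add_of_le hq
    have : q ≤ q * E := Nat.le_mul_of_pos_right q (by lia)
    lia
  lia

namespace IsCartier

section FiniteType

variable {k R M σ : Type*} [CommRing k] [CommRing R] [Algebra k R] [AddCommGroup M] [Module k M]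
  [Module R M] [IsScalarTower k R M] [Fintype σ] {x : σ → R} {d q : ℕ} {C : M →+ M}

theorem apply_mem_boundedDegree_smul (hC : IsCartier R q C) (hq : 0 < q) {V W : Submodule k M}
    (hVW : ∀ m ∈ boundedDegree k x (q - 1) • V, C m ∈ W) {m : M}
    (hm : m ∈ boundedDegree k x d • V) : C m ∈ boundedDegree k x (d / q) • W := by
  refine Submodule.smul_induction_on hm (fun r hr v hv ↦ ?_)
    fun _ _ h₁ h₂ ↦ map_add C _ _ ▸ add_mem h₁ h₂
  induction hr using Submodule.closure_induction with
  | zero => simp only [zero_smul, map_zero, zero_mem]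
  | add _ _ _ _ h₁ h₂ => simpa only [add_smul, map_add] using add_mem h₁ h₂
  | smul_mem c _ hr =>
    obtain ⟨a, ha, rfl⟩ := hr
    have hdiv : c • ∏ i, x i ^ a i = (∏ i, x i ^ (a i / q)) ^ q * (c • ∏ i, x i ^ (a i % q)) := by
      rw [mul_smul_comm, ← Finset.prod_pow, ← Finset.prod_mul_distrib]
      simp only [← pow_mul', ← pow_add, Nat.div_add_mod]
    rw [hdiv, mul_smul, hC.map_pow_smul]
    refine Submodule.smul_mem_smul
      (prod_pow_mem_boundedDegree fun i ↦ Nat.div_le_div_right (ha i)) (hVW _ ?_)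
    exact Submodule.smul_mem_smul (Submodule.smul_mem _ _ (prod_pow_mem_boundedDegree fun i ↦
      Nat.le_sub_one_of_lt (Nat.mod_lt _ hq))) hv

theorem map_le_span_inter (hC : IsCartier R q C) (hq : 0 < q)
    (hx : Algebra.adjoin k (Set.range x) = ⊤) {F : Submodule k M}
    (hF : ∀ m ∈ boundedDegree k x (q - 1) • F, C m ∈ F) {N : Submodule R M}
    (hN : N ≤ Submodule.span R (N ∩ F)) : hC.map N ≤ Submodule.span R (hC.map N ∩ F) := by
  let V : Submodule k M := N.restrictScalars k ⊓ F
  let W : Submodule k M := (hC.map N).restrictScalars k ⊓ F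
  have hVN : boundedDegree k x (q - 1) • V ≤ N.restrictScalars k :=
    smul_le_restrictScalars inf_le_left
  have hVF : boundedDegree k x (q - 1) • V ≤ boundedDegree k x (q - 1) • F :=
    smul_mono_right _ inf_le_right
  have hVW : ∀ m ∈ boundedDegree k x (q - 1) • V, C m ∈ W := fun m hm ↦
    ⟨⟨m, hVN hm, rfl⟩, hF m (hVF hm)⟩
  rintro _ ⟨m, hm, rfl⟩
  have hmV : m ∈ (Submodule.span R (V : Set M)).restrictScalars k := hN hm
  obtain ⟨d, hd⟩ := exists_le_boundedDegree_smul hx (Submodule.fg_span_singleton m)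
    ((Submodule.span_singleton_le_iff_mem m _).mpr hmV)
  have hspan : boundedDegree k x (d / q) • W ≤ (Submodule.span R (W : Set M)).restrictScalars k :=
    smul_le_restrictScalars Submodule.subset_span
  exact hspan (hC.apply_mem_boundedDegree_smul hq hVW (hd (Submodule.mem_span_singleton_self m)))

theorem exists_fg_forall_apply_mem [Finite k] [Module.Finite R M] (hC : IsCartier R q C)
    (hq : 2 ≤ q) (hx : Algebra.adjoin k (Set.range x) = ⊤) {T : Submodule k M} (hT : T.FG) :
    ∃ F : Submodule k M, F.FG ∧ T ≤ F ∧ ∀ m ∈ boundedDegree k x (q - 1) • F, C m ∈ F := by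
  obtain ⟨G, hG⟩ := Module.Finite.fg_top (R := R) (M := M)
  let V : Submodule k M := Submodule.span k G
  have hVtop : Submodule.span R (V : Set M) = ⊤ := by
    rw [Submodule.span_span_of_tower, hG]
  have hle (S : Submodule k M) : S ≤ (Submodule.span R (V : Set M)).restrictScalars k := by
    rw [hVtop]
    exact le_top
  have hV : V.FG := Submodule.fg_span G.finite_toSet
  have : Module.Finite k ↥(boundedDegree k x (q - 1) • V) :=
    Module.Finite.iff_fg.mpr (smul_fg boundedDegree_fg hV)
  have hfin : ((boundedDegree k x (q - 1) • V : Submodule k M) : Set M).Finite :=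
    Module.finite_of_finite k
  obtain ⟨K, hK⟩ := exists_le_boundedDegree_smul hx (Submodule.fg_span (hfin.image C)) (hle _)
  obtain ⟨D₀, hD₀⟩ := exists_le_boundedDegree_smul hx hT (hle _)
  obtain ⟨D₁, hD₁⟩ := exists_forall_div_add_le hq K
  refine ⟨boundedDegree k x (max D₀ D₁) • V, smul_fg boundedDegree_fg hV,
    hD₀.trans (boundedDegree_smul_mono V (le_max_left _ _)), fun m hm ↦ ?_⟩
  have hCm := hC.apply_mem_boundedDegree_smul (two_pos.trans_le hq)
    (fun v hv ↦ hK (Submodule.subset_span (Set.mem_image_of_mem C hv)))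
    (boundedDegree_smul_smul_le hm)
  exact boundedDegree_smul_mono V (hD₁ _ (le_max_right _ _)) (boundedDegree_smul_smul_le hCm)

variable (k) in
theorem exists_iterate_map_eq_add_of_finiteType [Finite k] [Algebra.FiniteType k R]
    [Module.Finite R M] (hC : IsCartier R q C) (hq : 2 ≤ q) {N : Submodule R M} (hN : N.FG) :
    ∃ i j, 0 < i ∧ 0 < j ∧ hC.map^[i] N = hC.map^[i + j] N := by
  obtain ⟨s, hs⟩ := Algebra.FiniteType.out (R := k) (A := R)
  have hx : Algebra.adjoin k (Set.range ((↑) : s → R)) = ⊤ := by simpa using hs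
  obtain ⟨G, rfl⟩ := hN
  obtain ⟨F, hFfg, hGF, hF⟩ := hC.exists_fg_forall_apply_mem hq hx (T := Submodule.span k G)
    (Submodule.fg_span G.finite_toSet)
  have : Module.Finite k F := Module.Finite.iff_fg.mpr hFfg
  refine exists_eq_add_of_le_span_inter (Module.finite_of_finite k : (F : Set M).Finite) fun i ↦ ?_
  induction i with
  | zero =>
    exact Submodule.span_mono fun g hg ↦
      ⟨Submodule.subset_span hg, hGF (Submodule.subset_span hg)⟩
  | succ i ih =>
    rw [iterate_succ_apply']
    exact hC.map_le_span_inter (two_pos.trans_le hq) hx hF ih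

end FiniteType

end IsCartier

theorem stmt3_general {R M : Type*} [CommRing R] [AddCommGroup M] [Module R M] [Module.Finite R M]
    (q : ℕ) (hq : 2 ≤ q) (C : M → M) (hCadd : ∀ x y : M, C (x + y) = C x + C y)
    (hCsl : ∀ (a : R) (x : M), C (a ^ q • x) = a • C x) (N : Submodule R M) :
    (∀ (k : Type*) [CommRing k] [Finite k] (φ : k →+* R), φ.FiniteType →
      ∃ i j : ℕ, 0 < i ∧ 0 < j ∧ C^[i] '' (N : Set M) = C^[i + j] '' (N : Set M)) ∧
    (IsNoetherianRing R → (C '' (N : Set M) ⊆ (N : Set M) ∨ (N : Set M) ⊆ C '' (N : Set M)) →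
      ∃ i : ℕ, 0 < i ∧ C^[i] '' (N : Set M) = C^[i + 1] '' (N : Set M)) := by
  have hC : IsCartier R q (AddMonoidHom.mk' C hCadd) := ⟨hCsl⟩
  have hcoe (i : ℕ) : C^[i] '' (N : Set M) = hC.map^[i] N := (hC.coe_iterate_map i).symm
  simp only [hcoe, SetLike.coe_set_eq]
  refine ⟨fun k _ _ φ hφ ↦ ?_, fun _ h ↦ ?_⟩
  · let := φ.toAlgebra
    have : Algebra.FiniteType k R := hφ
    let : Module k M := Module.compHom M φ
    have : IsScalarTower k R M := ⟨fun a r m ↦ by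
      rw [Algebra.smul_def, mul_smul]
      rfl⟩
    have : IsNoetherianRing R := Algebra.FiniteType.isNoetherianRing k R
    exact hC.exists_iterate_map_eq_add_of_finiteType k hq (IsNoetherian.noetherian N)
  · obtain ⟨n, hn⟩ : ∃ n, hC.map^[n] N = hC.map^[n + 1] N :=
      h.elim (hC.exists_iterate_map_eq_succ_of_map_le hq (IsNoetherian.noetherian N))
        hC.exists_iterate_map_eq_succ_of_le_map
    refine ⟨n + 1, n.succ_pos, ?_⟩
    rw [iterate_succ_apply', hn, ← iterate_succ_apply' hC.map]

theorem stmt3 {R M : Type*} [CommRing R] [AddCommGroup M] [Module R M]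
    (p : ℕ) [Fact p.Prime] [CharP R p]
    (e q : ℕ) (he : 1 ≤ e) (hq : q = p ^ e)
    (C : M → M) (hCadd : ∀ x y : M, C (x + y) = C x + C y)
    (hCsl : ∀ (a : R) (x : M), C (a ^ q • x) = a • C x)
    [Module.Finite R M] (N : Submodule R M) (hNfg : N.FG) :
    -- (1) if `R` is a finitely generated `𝔽_p`-algebra, then `N` is `C`-preperiodic
    ((ZMod.castHom (dvd_refl p) R).FiniteType →
      ∃ i j : ℕ, 0 < i ∧ 0 < j ∧ C^[i] '' (N : Set M) = C^[i + j] '' (N : Set M)) ∧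
    -- (2) if `R` is Noetherian and F-finite and `C(N) ⊆ N` or `N ⊆ C(N)`, then
    -- `N` is `C`-preperiodic
    (IsNoetherianRing R → (frobenius R p).Finite →
      (C '' (N : Set M) ⊆ (N : Set M) ∨ (N : Set M) ⊆ C '' (N : Set M)) →
      ∃ i j : ℕ, 0 < i ∧ 0 < j ∧ C^[i] '' (N : Set M) = C^[i + j] '' (N : Set M)) := by
  have h2q : 2 ≤ q := hq ▸ (Fact.out : p.Prime).two_le.trans (Nat.le_self_pow (by lia) p)
  obtain ⟨h₁, h₂⟩ := stmt3_general q h2q C hCadd hCsl N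
  exact ⟨h₁ (ZMod p) _, fun hR _ h ↦ (h₂ hR h).imp fun i ⟨hi, h⟩ ↦ ⟨1, hi, one_pos, h⟩⟩
end

section
/- Let R be a Noetherian F-finite commutative ring of characteristic p, let (M,C) be an F-pure q-Cartier module over R and let f ∈ R. Then: (1) for real numbers t ≥ s ≥ 0, τ(M,f^t) ⊆ τ(M,f^s); (2) for every real t ≥ 0, τ(M,f^{t+1}) = f·τ(M,f^t); (3) for every real t ≥ 0, C(τ(M,f^{qt})) = τ(M,f^t); (4) for positive integers n and m, τ(M,f^{n/q^m}) = C^m(f^n M). -/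
/-!
Everything happens at the finite levels `C^m (f^n M)`. Since `C^j (f^(n q^j) M) = f^n C^j M` and
`C^j M = M` by F-purity, the level `(m, n)` equals the level `(m + j, n q^j)`. Together with
`⌈t q^(m+1)⌉ ≤ ⌈t q^m⌉ q` this makes the union defining `τ(M, f^t)` increasing, and when `t q^m` is
an integer the union is stationary from the level `m` on.
-/

open Pointwise Function

/-- The test module `τ(M, f^t) = ⋃_{m ≥ 0} C^m (f^{⌈t q^m⌉} M)` of an F-pure `q`-Cartier
module `(M, C)` with respect to `f` at level `t ≥ 0`. -/
def testSet {R M : Type*} [CommRing R] [AddCommGroup M] [Module R M]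
    (C : M → M) (q : ℕ) (f : R) (t : ℝ) : Set M :=
  ⋃ m : ℕ, C^[m] '' ((f ^ ⌈t * (q : ℝ) ^ m⌉₊) • (Set.univ : Set M))

section Levels

variable {R M : Type*} [Monoid R] [MulAction R M]

/-- The level `C^m (f^n M)`, out of which test modules are built as increasing unions. It is encoded
as a bare set, so that `C` may be any map and the coefficients any monoid. -/
def cartierImage (C : M → M) (f : R) (m n : ℕ) : Set M :=
  C^[m] '' (f ^ n • Set.univ)

theorem cartierImage_antitone (C : M → M) (f : R) (m : ℕ) : Antitone (cartierImage C f m) := by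
  intro a b hab
  obtain ⟨c, rfl⟩ := Nat.exists_eq_add_of_le hab
  rw [cartierImage, pow_add, mul_smul]
  exact Set.image_mono (Set.smul_set_mono (Set.subset_univ _))

theorem image_cartierImage (C : M → M) (f : R) (m n : ℕ) :
    C '' cartierImage C f m n = cartierImage C f (m + 1) n := by
  rw [cartierImage, cartierImage, ← Set.image_comp, iterate_succ']

variable {q : ℕ} {C : M → M}

theorem iterate_pow_smul (hC : ∀ (a : R) (x : M), C (a ^ q • x) = a • C x)
    (m : ℕ) (a : R) (x : M) : C^[m] (a ^ q ^ m • x) = a • C^[m] x := by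
  induction m generalizing x with
  | zero => simp
  | succ m ih => rw [iterate_succ_apply, iterate_succ_apply, pow_succ, pow_mul, hC, ih]

theorem image_iterate_pow_smul (hC : ∀ (a : R) (x : M), C (a ^ q • x) = a • C x)
    (m : ℕ) (a : R) (s : Set M) : C^[m] '' (a ^ q ^ m • s) = a • C^[m] '' s :=
  Set.image_comm (iterate_pow_smul hC m a)

theorem cartierImage_add_pow (hC : ∀ (a : R) (x : M), C (a ^ q • x) = a • C x)
    (f : R) (m n : ℕ) : cartierImage C f m (n + q ^ m) = f • cartierImage C f m n := by
  rw [cartierImage, add_comm n, pow_add, mul_smul, image_iterate_pow_smul hC, cartierImage]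

theorem cartierImage_add_mul_pow (hC : ∀ (a : R) (x : M), C (a ^ q • x) = a • C x)
    (hpure : Surjective C) (f : R) (m n j : ℕ) :
    cartierImage C f (m + j) (n * q ^ j) = cartierImage C f m n := by
  rw [cartierImage, iterate_add, Set.image_comp, pow_mul, image_iterate_pow_smul hC,
    Set.image_univ_of_surjective (hpure.iterate j), cartierImage]

theorem cartierImage_ceil_monotone (hC : ∀ (a : R) (x : M), C (a ^ q • x) = a • C x)
    (hpure : Surjective C) (f : R) (t : ℝ) :
    Monotone fun m ↦ cartierImage C f m ⌈t * (q : ℝ) ^ m⌉₊ := by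
  refine monotone_nat_of_le_succ fun m ↦ ?_
  have hceil : ⌈t * (q : ℝ) ^ (m + 1)⌉₊ ≤ ⌈t * (q : ℝ) ^ m⌉₊ * q ^ 1 := by
    rw [Nat.ceil_le, pow_succ, ← mul_assoc, pow_one, Nat.cast_mul]
    gcongr
    exact Nat.le_ceil _
  calc cartierImage C f m ⌈t * (q : ℝ) ^ m⌉₊
      = cartierImage C f (m + 1) (⌈t * (q : ℝ) ^ m⌉₊ * q ^ 1) :=
        (cartierImage_add_mul_pow hC hpure f m _ 1).symm
    _ ⊆ cartierImage C f (m + 1) ⌈t * (q : ℝ) ^ (m + 1)⌉₊ := cartierImage_antitone C f _ hceil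

end Levels

section TestSet

variable {R M : Type*} [CommRing R] [AddCommGroup M] [Module R M]

theorem testSet_eq_iUnion_cartierImage (C : M → M) (q : ℕ) (f : R) (t : ℝ) :
    testSet C q f t = ⋃ m : ℕ, cartierImage C f m ⌈t * (q : ℝ) ^ m⌉₊ :=
  rfl

theorem testSet_antitone (C : M → M) (q : ℕ) (f : R) : Antitone (testSet C q f) := by
  intro s t hst
  refine Set.iUnion_mono fun m ↦ cartierImage_antitone C f m (Nat.ceil_mono ?_)
  gcongr

variable {q : ℕ} {C : M → M}

theorem testSet_add_one (hC : ∀ (a : R) (x : M), C (a ^ q • x) = a • C x)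
    (f : R) {t : ℝ} (ht : 0 ≤ t) : testSet C q f (t + 1) = f • testSet C q f t := by
  have hceil (m : ℕ) : ⌈(t + 1) * (q : ℝ) ^ m⌉₊ = ⌈t * (q : ℝ) ^ m⌉₊ + q ^ m := by
    rw [add_mul, one_mul, ← Nat.cast_pow, Nat.ceil_add_natCast (by positivity)]
  simp only [testSet_eq_iUnion_cartierImage, Set.smul_set_iUnion, hceil, cartierImage_add_pow hC]

theorem image_testSet_mul (hC : ∀ (a : R) (x : M), C (a ^ q • x) = a • C x)
    (hpure : Surjective C) (f : R) (t : ℝ) :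
    C '' testSet C q f (q * t) = testSet C q f t := by
  have hexp (m : ℕ) : (q : ℝ) * t * (q : ℝ) ^ m = t * (q : ℝ) ^ (m + 1) := by ring
  simp only [testSet_eq_iUnion_cartierImage, Set.image_iUnion, image_cartierImage, hexp]
  exact (cartierImage_ceil_monotone hC hpure f t).iUnion_nat_add 1

theorem testSet_eq_cartierImage (hC : ∀ (a : R) (x : M), C (a ^ q • x) = a • C x)
    (hpure : Surjective C) (f : R) {t : ℝ} {n m : ℕ} (ht : t * (q : ℝ) ^ m = n) :
    testSet C q f t = cartierImage C f m n := by
  have hceil (j : ℕ) : ⌈t * (q : ℝ) ^ (j + m)⌉₊ = n * q ^ j := by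
    rw [add_comm, pow_add, ← mul_assoc, ht, ← Nat.cast_pow, ← Nat.cast_mul, Nat.ceil_natCast]
  calc testSet C q f t
      = ⋃ j : ℕ, cartierImage C f (j + m) ⌈t * (q : ℝ) ^ (j + m)⌉₊ :=
        ((cartierImage_ceil_monotone hC hpure f t).iUnion_nat_add m).symm
    _ = ⋃ _ : ℕ, cartierImage C f m n :=
        Set.iUnion_congr fun j ↦ by
          rw [hceil, add_comm, cartierImage_add_mul_pow hC hpure]
    _ = cartierImage C f m n := Set.iUnion_const _

end TestSet

theorem stmt8_general {R M : Type*} [CommRing R] [AddCommGroup M] [Module R M]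
    {q : ℕ} (hq : q ≠ 0) {C : M → M} (hC : ∀ (a : R) (x : M), C (a ^ q • x) = a • C x)
    (hpure : Surjective C) (f : R) :
    (∀ s t : ℝ, 0 ≤ s → s ≤ t → testSet C q f t ⊆ testSet C q f s) ∧
    (∀ t : ℝ, 0 ≤ t → testSet C q f (t + 1) = f • testSet C q f t) ∧
    (∀ t : ℝ, 0 ≤ t → C '' testSet C q f ((q : ℝ) * t) = testSet C q f t) ∧
    (∀ n m : ℕ, testSet C q f ((n : ℝ) / (q : ℝ) ^ m) =
      C^[m] '' ((f ^ n) • (Set.univ : Set M))) :=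
  ⟨fun _ _ _ hst ↦ testSet_antitone C q f hst,
    fun _ ht ↦ testSet_add_one hC f ht,
    fun t _ ↦ image_testSet_mul hC hpure f t,
    fun n m ↦ testSet_eq_cartierImage hC hpure f
      (div_mul_cancel₀ (n : ℝ) (pow_ne_zero m (Nat.cast_ne_zero.2 hq)))⟩

theorem stmt8 {R M : Type*} [CommRing R] [AddCommGroup M] [Module R M]
    (p : ℕ) [Fact p.Prime] [CharP R p] [IsNoetherianRing R]
    (hFF : (frobenius R p).Finite)
    (e q : ℕ) (he : 1 ≤ e) (hq : q = p ^ e)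
    (C : M → M) (hCadd : ∀ x y : M, C (x + y) = C x + C y)
    (hCsl : ∀ (a : R) (x : M), C (a ^ q • x) = a • C x)
    [Module.Finite R M] (hFpure : Function.Surjective C) (f : R) :
    -- (1) monotonicity
    (∀ s t : ℝ, 0 ≤ s → s ≤ t → testSet C q f t ⊆ testSet C q f s) ∧
    -- (2) `τ(M, f^{t+1}) = f · τ(M, f^t)`
    (∀ t : ℝ, 0 ≤ t → testSet C q f (t + 1) = f • testSet C q f t) ∧
    -- (3) `C(τ(M, f^{qt})) = τ(M, f^t)`
    (∀ t : ℝ, 0 ≤ t → C '' testSet C q f ((q : ℝ) * t) = testSet C q f t) ∧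
    -- (4) `τ(M, f^{n/q^m}) = C^m(f^n M)`
    (∀ n m : ℕ, 0 < n → 0 < m →
        testSet C q f ((n : ℝ) / (q : ℝ) ^ m) =
          C^[m] '' ((f ^ n) • (Set.univ : Set M))) := by
  obtain ⟨h1, h2, h3, h4⟩ :=
    stmt8_general (hq ▸ pow_ne_zero e (Fact.out : p.Prime).ne_zero) hCsl hFpure f
  exact ⟨h1, h2, h3, fun n m _ _ ↦ h4 n m⟩
end
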